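/- arXiv:2603.02426 — 3 statements merged into one kernel-verified Lean document; each statement's English description precedes it below -/
import Mathlib

section
/- Let d, r, K be positive integers with d ≥ 2r. Let B, B* ∈ ℝ^{d×r} have orthonormal columns and let B*_⊥ ∈ ℝ^{d×(d−r)} be an orthonormal complement of B*. For k = 1,…,K let ω^k, ω^{*,k} ∈ ℝ^r, set z^k := B* ω^{*,k} and x^k := B ω^k − z^k, and let Z ∈ ℝ^{d×K} be the matrix whose k-th column is z^k. Assume the vectors z^1,…,z^K span the column space of B* (equivalently, rank Z = r). Then (1/K) Σ_{k=1}^K ‖x^k‖² ≥ (‖B*_⊥ᵀ B‖_F² / (rK)) · λ⁺_min(Z Zᵀ), where λ⁺_min(Z Zᵀ) denotes the smallest nonzero eigenvalue of Z Zᵀ and ‖·‖_F is the Frobenius norm. -/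
open Matrix BigOperators

/-- Frobenius norm of a real matrix. -/
noncomputable def frobNorm {m n : ℕ} (A : Matrix (Fin m) (Fin n) ℝ) : ℝ :=
  Real.sqrt (∑ i, ∑ j, (A i j) ^ 2)

/-!
Write `Z = B* W`. For any coefficients `Ω`, the error `‖Z - B Ω‖` is at least the distance
`‖(1 - B Bᴴ) B* W‖` to the projection of `Z` on the columns of `B`. As `Z` has full rank, the
eigenvalues of `W Wᴴ` are exactly the nonzero eigenvalues of `Z Zᴴ`, so `λ • 1 ≤ W Wᴴ` and `W`
can be removed at the cost of a factor `λ` on the squared norm. What is left,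
`‖(1 - B Bᴴ) B*‖²`, equals `‖B*_⊥ᴴ B‖²`: both are `r - ‖B*ᴴ B‖²` by Pythagoras. Working with
Frobenius norms throughout, rather than passing through the spectral norm, saves the factor `1 / r`.
-/

section Eigenvalues

variable {m n R : Type*} [Fintype m] [Fintype n] [DecidableEq m] [DecidableEq n]

theorem hasEigenvalue_toLin'_mul_mul [CommRing R] {V : Matrix m n R} {U : Matrix n m R}
    (hUV : U * V = 1) {A : Matrix n n R} {μ : R} (hμ : Module.End.HasEigenvalue A.toLin' μ) :
    Module.End.HasEigenvalue (V * A * U).toLin' μ := by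
  obtain ⟨v, hv⟩ := hμ.exists_hasEigenvector
  have hAv : A *ᵥ v = μ • v := by simpa only [toLin'_apply] using hv.apply_eq_smul
  have hUVv : U *ᵥ V *ᵥ v = v := by rw [mulVec_mulVec, hUV, one_mulVec]
  refine Module.End.hasEigenvalue_of_hasEigenvector (x := V *ᵥ v)
    ⟨Module.End.mem_eigenspace_iff.mpr ?_, fun hVv => hv.2 ?_⟩
  · rw [toLin'_apply, ← mulVec_mulVec, hUVv, ← mulVec_mulVec, hAv, mulVec_smul]
  · rw [← hUVv, hVv, mulVec_zero]

theorem isUnit_of_rank_eq_card [Field R] {A : Matrix n n R} (hA : A.rank = Fintype.card n) :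
    IsUnit A := by
  have hrange : LinearMap.range A.mulVecLin = ⊤ :=
    Submodule.eq_top_of_finrank_eq (by rw [Module.finrank_fintype_fun_eq_card]; exact hA)
  exact mulVec_surjective_iff_isUnit.mp (LinearMap.range_eq_top.mp hrange)

end Eigenvalues

section Frobenius

open scoped Matrix.Norms.Frobenius MatrixOrder ComplexOrder

theorem frobNorm_eq_norm {m n : ℕ} (A : Matrix (Fin m) (Fin n) ℝ) : frobNorm A = ‖A‖ := by
  simp only [frobNorm, frobenius_norm_def, Real.sqrt_eq_rpow, Real.norm_eq_abs, Real.rpow_two,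
    sq_abs]

variable {𝕜 m n p q κ : Type*} [RCLike 𝕜]
  [Fintype m] [Fintype n] [Fintype p] [Fintype q] [Fintype κ]

theorem frobenius_norm_sq_eq_sum (A : Matrix m n 𝕜) : ‖A‖ ^ 2 = ∑ j, ∑ i, ‖A i j‖ ^ 2 := by
  rw [frobenius_norm_def, ← Real.sqrt_eq_rpow, Real.sq_sqrt (by positivity), Finset.sum_comm]
  simp only [Real.rpow_two]

theorem frobenius_norm_sq_eq_re_trace (A : Matrix m n 𝕜) :
    ‖A‖ ^ 2 = RCLike.re (Aᴴ * A).trace := by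
  simp only [frobenius_norm_sq_eq_sum, trace, diag_apply, mul_apply, conjTranspose_apply,
    RCLike.star_def, RCLike.conj_mul, map_sum, ← RCLike.ofReal_pow, RCLike.ofReal_re]

theorem mul_frobenius_norm_sq_le [DecidableEq n] {c : ℝ} {W : Matrix n κ 𝕜}
    (hW : c • 1 ≤ W * Wᴴ) (C : Matrix m n 𝕜) : c * ‖C‖ ^ 2 ≤ ‖C * W‖ ^ 2 := by
  have hpos : 0 ≤ RCLike.re (C * (W * Wᴴ - c • 1) * Cᴴ).trace :=
    (RCLike.nonneg_iff.mp ((le_iff.mp hW).mul_mul_conjTranspose_same C).trace_nonneg).1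
  have hsplit : C * (W * Wᴴ - c • 1) * Cᴴ = C * W * (C * W)ᴴ - c • (C * Cᴴ) := by
    simp only [Matrix.mul_sub, Matrix.sub_mul, conjTranspose_mul, Matrix.mul_smul, Matrix.smul_mul,
      Matrix.mul_one, Matrix.mul_assoc]
  rw [hsplit, trace_sub, trace_smul, map_sub, RCLike.smul_re, trace_mul_comm, trace_mul_comm C,
    ← frobenius_norm_sq_eq_re_trace, ← frobenius_norm_sq_eq_re_trace] at hpos
  exact sub_nonneg.mp hpos

section Orthonormal

variable [DecidableEq n]

theorem frobenius_norm_sq_of_conjTranspose_mul_self {B : Matrix m n 𝕜} (hB : Bᴴ * B = 1) :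
    ‖B‖ ^ 2 = Fintype.card n := by
  rw [frobenius_norm_sq_eq_re_trace, hB, trace_one, RCLike.natCast_re]

theorem frobenius_norm_sq_conjTranspose_mul_add [DecidableEq m] {P : Matrix m p 𝕜}
    {Q : Matrix m q 𝕜} (hPQ : P * Pᴴ + Q * Qᴴ = 1) (M : Matrix m κ 𝕜) :
    ‖Pᴴ * M‖ ^ 2 + ‖Qᴴ * M‖ ^ 2 = ‖M‖ ^ 2 := by
  have hsum : (Pᴴ * M)ᴴ * (Pᴴ * M) + (Qᴴ * M)ᴴ * (Qᴴ * M) = Mᴴ * M :=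
    calc _ = Mᴴ * ((P * Pᴴ + Q * Qᴴ) * M) := by
          simp only [conjTranspose_mul, conjTranspose_conjTranspose, Matrix.add_mul,
            Matrix.mul_add, Matrix.mul_assoc]
      _ = Mᴴ * M := by rw [hPQ, Matrix.one_mul]
  simp only [frobenius_norm_sq_eq_re_trace, ← map_add, ← trace_add, hsum]

theorem frobenius_norm_sq_sub_proj {B : Matrix m n 𝕜} (hB : Bᴴ * B = 1) (M : Matrix m κ 𝕜) :
    ‖M - B * (Bᴴ * M)‖ ^ 2 = ‖M‖ ^ 2 - ‖Bᴴ * M‖ ^ 2 := by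
  classical
  have hsymm : (1 - B * Bᴴ)ᴴ = 1 - B * Bᴴ := by simp
  have hidem : B * Bᴴ * (B * Bᴴ) = B * Bᴴ := by
    rw [Matrix.mul_assoc, ← Matrix.mul_assoc Bᴴ, hB, Matrix.one_mul]
  have hcomp : B * Bᴴ + (1 - B * Bᴴ) * (1 - B * Bᴴ)ᴴ = 1 := by
    rw [hsymm, mul_sub, mul_one, sub_mul, one_mul, hidem]
    abel
  have hpyth := frobenius_norm_sq_conjTranspose_mul_add hcomp M
  rw [hsymm, Matrix.sub_mul, Matrix.one_mul, Matrix.mul_assoc] at hpyth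
  linarith

theorem frobenius_norm_sub_proj_le {B : Matrix m n 𝕜} (hB : Bᴴ * B = 1) (M : Matrix m κ 𝕜)
    (Y : Matrix n κ 𝕜) : ‖M - B * (Bᴴ * M)‖ ≤ ‖M - B * Y‖ := by
  have hresidual : M - B * Y - B * (Bᴴ * (M - B * Y)) = M - B * (Bᴴ * M) := by
    rw [Matrix.mul_sub, ← Matrix.mul_assoc Bᴴ, hB, Matrix.one_mul, Matrix.mul_sub]
    abel
  have hpyth := frobenius_norm_sq_sub_proj hB (M - B * Y)
  rw [hresidual] at hpyth
  refine (sq_le_sq₀ (norm_nonneg _) (norm_nonneg _)).mp ?_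
  rw [hpyth]
  exact sub_le_self _ (sq_nonneg _)

theorem frobenius_norm_sq_complement_mul [DecidableEq m] {B Bstar : Matrix m n 𝕜}
    {Bperp : Matrix m p 𝕜} (hB : Bᴴ * B = 1) (hBstar : Bstarᴴ * Bstar = 1)
    (hcomp : Bstar * Bstarᴴ + Bperp * Bperpᴴ = 1) :
    ‖Bperpᴴ * B‖ ^ 2 = ‖Bstar - B * (Bᴴ * Bstar)‖ ^ 2 := by
  have hcross : ‖Bᴴ * Bstar‖ = ‖Bstarᴴ * B‖ := by
    rw [← frobenius_norm_conjTranspose, conjTranspose_mul, conjTranspose_conjTranspose]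
  rw [frobenius_norm_sq_sub_proj hB, hcross, frobenius_norm_sq_of_conjTranspose_mul_self hBstar,
    ← frobenius_norm_sq_of_conjTranspose_mul_self hB,
    ← frobenius_norm_sq_conjTranspose_mul_add hcomp B, add_sub_cancel_left]

theorem smul_one_le_mul_conjTranspose_of_le_hasEigenvalue [DecidableEq m] {V : Matrix m n 𝕜}
    {W : Matrix n κ 𝕜} {c : ℝ} (hV : Vᴴ * V = 1) (hrank : (V * W).rank = Fintype.card n)
    (hc : ∀ μ : ℝ, μ ≠ 0 →
      Module.End.HasEigenvalue (V * W * (V * W)ᴴ).toLin' (μ : 𝕜) → c ≤ μ) :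
    c • 1 ≤ W * Wᴴ := by
  have hrankW : (W * Wᴴ).rank = Fintype.card n := by
    rw [rank_self_mul_conjTranspose]
    exact W.rank_le_card_height.antisymm (hrank ▸ rank_mul_le_right V W)
  have hzero : (0 : ℝ) ∉ spectrum ℝ (W * Wᴴ) :=
    spectrum.zero_notMem ℝ (isUnit_of_rank_eq_card hrankW)
  rw [← Algebra.algebraMap_eq_smul_one]
  refine algebraMap_le_of_le_spectrum (fun μ hμ => hc μ (ne_of_mem_of_not_mem hμ hzero) ?_)
    (isHermitian_mul_conjTranspose_self W)
  have hWeig : Module.End.HasEigenvalue (W * Wᴴ).toLin' (μ : 𝕜) := by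
    rwa [Module.End.hasEigenvalue_iff_mem_spectrum, spectrum_toLin', ← RCLike.algebraMap_eq_ofReal,
      spectrum.algebraMap_mem_iff]
  have hassoc : V * W * (V * W)ᴴ = V * (W * Wᴴ) * Vᴴ := by
    simp only [conjTranspose_mul, Matrix.mul_assoc]
  rw [hassoc]
  exact hasEigenvalue_toLin'_mul_mul hV hWeig

theorem local_head_lower_bound_frobenius_general [DecidableEq m]
    {B Bstar : Matrix m n 𝕜} {Bperp : Matrix m p 𝕜}
    (hB : Bᴴ * B = 1) (hBstar : Bstarᴴ * Bstar = 1)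
    (hcomp : Bstar * Bstarᴴ + Bperp * Bperpᴴ = 1)
    {ω ωstar : κ → n → 𝕜} {z x : κ → m → 𝕜}
    (hz : ∀ k, z k = Bstar *ᵥ ωstar k) (hx : ∀ k, x k = B *ᵥ ω k - z k)
    {Z : Matrix m κ 𝕜} (hZ : ∀ i k, Z i k = z k i) (hrank : Z.rank = Fintype.card n)
    {lam : ℝ} (hlam_min : ∀ μ : ℝ, μ ≠ 0 →
      Module.End.HasEigenvalue (Z * Zᴴ).toLin' (μ : 𝕜) → lam ≤ μ) :
    ‖Bperpᴴ * B‖ ^ 2 * lam ≤ ∑ k, ∑ i, ‖x k i‖ ^ 2 := by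
  let Ω : Matrix n κ 𝕜 := (of ω)ᵀ
  let W : Matrix n κ 𝕜 := (of ωstar)ᵀ
  obtain rfl : Z = Bstar * W := by
    ext i k
    rw [hZ, hz]
    rfl
  have herror : ‖Bstar * W - B * Ω‖ ^ 2 = ∑ k, ∑ i, ‖x k i‖ ^ 2 := by
    rw [norm_sub_rev]
    simp only [frobenius_norm_sq_eq_sum, Matrix.sub_apply, hZ, hx, Pi.sub_apply]
    rfl
  have hresidual :
      (Bstar - B * (Bᴴ * Bstar)) * W = Bstar * W - B * (Bᴴ * (Bstar * W)) := by
    simp only [Matrix.sub_mul, Matrix.mul_assoc]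
  calc ‖Bperpᴴ * B‖ ^ 2 * lam
      = lam * ‖Bstar - B * (Bᴴ * Bstar)‖ ^ 2 := by
        rw [frobenius_norm_sq_complement_mul hB hBstar hcomp, mul_comm]
    _ ≤ ‖(Bstar - B * (Bᴴ * Bstar)) * W‖ ^ 2 :=
        mul_frobenius_norm_sq_le
          (smul_one_le_mul_conjTranspose_of_le_hasEigenvalue hBstar hrank hlam_min) _
    _ ≤ ‖Bstar * W - B * Ω‖ ^ 2 := by
        rw [hresidual]
        gcongr
        exact frobenius_norm_sub_proj_le hB (Bstar * W) Ω
    _ = ∑ k, ∑ i, ‖x k i‖ ^ 2 := herror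

end Orthonormal

end Frobenius

/-- Lower bound of local head errors (Frobenius norm version):
(1/K) Σ_k ‖x^k‖² ≥ (‖B*_⊥ᵀ B‖_F² / (rK)) · λ⁺_min(Z Zᵀ). -/
theorem local_head_lower_bound_frobenius
    (d r K : ℕ) (hd : 0 < d) (hr : 0 < r) (hK : 0 < K) (hdr : 2 * r ≤ d)
    (B Bstar : Matrix (Fin d) (Fin r) ℝ) (Bperp : Matrix (Fin d) (Fin (d - r)) ℝ)
    (hB : Bᵀ * B = 1) (hBstar : Bstarᵀ * Bstar = 1)
    (hBperp : Bperpᵀ * Bperp = 1) (horth : Bstarᵀ * Bperp = 0)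
    (hcomp : Bstar * Bstarᵀ + Bperp * Bperpᵀ = 1)
    (ω ωstar : Fin K → Fin r → ℝ)
    (z x : Fin K → Fin d → ℝ)
    (hz : ∀ k, z k = Bstar.mulVec (ωstar k))
    (hx : ∀ k, x k = B.mulVec (ω k) - z k)
    (Z : Matrix (Fin d) (Fin K) ℝ) (hZ : ∀ i k, Z i k = z k i)
    (hrank : Z.rank = r)
    -- `lam` is the smallest nonzero eigenvalue of the PSD matrix Z Zᵀ
    (lam : ℝ) (hlam_ne : lam ≠ 0)
    (hlam_eig : Module.End.HasEigenvalue (Matrix.toLin' (Z * Zᵀ)) lam)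
    (hlam_min : ∀ μ : ℝ, μ ≠ 0 →
      Module.End.HasEigenvalue (Matrix.toLin' (Z * Zᵀ)) μ → lam ≤ μ) :
    (1 / (K : ℝ)) * ∑ k, (∑ i, (x k i) ^ 2)
      ≥ (frobNorm (Bperpᵀ * B)) ^ 2 / ((r : ℝ) * (K : ℝ)) * lam := by
  have hmain : frobNorm (Bperpᵀ * B) ^ 2 * lam ≤ ∑ k, ∑ i, x k i ^ 2 := by
    simpa only [frobNorm_eq_norm, conjTranspose_eq_transpose_of_trivial, Real.norm_eq_abs, sq_abs]
      using local_head_lower_bound_frobenius_general (Bperp := Bperp) (lam := lam) hB hBstar hcomp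
        hz hx hZ (by simpa using hrank) hlam_min
  have hr_one : (1 : ℝ) ≤ r := by exact_mod_cast hr
  calc frobNorm (Bperpᵀ * B) ^ 2 / (r * K) * lam
      = frobNorm (Bperpᵀ * B) ^ 2 * lam / r / K := by ring
    _ ≤ (∑ k, ∑ i, x k i ^ 2) / r / K := by gcongr
    _ ≤ (∑ k, ∑ i, x k i ^ 2) / K := by
      gcongr
      exact div_le_self (by positivity) hr_one
    _ = 1 / K * ∑ k, ∑ i, x k i ^ 2 := by ring
end

section
/- Let B ∈ ℝ^{d×r} satisfy BᵀB = I_r, let Q ∈ ℝ^{d×r} satisfy BᵀQ = 0 and ‖Q‖_F² < 1/4, and let R ∈ ℝ^{r×r} be an upper triangular matrix with positive diagonal entries satisfying RᵀR = I_r + QᵀQ. Then R is invertible, ‖R^{−1}‖ ≤ 1/(1 − 2‖Q‖_F²), and ‖R^{−1} − I_r‖ ≤ 4‖Q‖_F², where ‖·‖ denotes the spectral norm. -/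
open Matrix BigOperators

/-- Spectral norm (largest singular value) of a real matrix. -/
noncomputable def specNorm {m n : ℕ} (A : Matrix (Fin m) (Fin n) ℝ) : ℝ :=
  ‖LinearMap.toContinuousLinearMap (Matrix.toEuclideanLin A)‖

/-!
Write `S` for `R⁻¹`. Since `RᴴR = 1 + QᴴQ ≥ 1`, the matrix `S` is a contraction, and multiplying
`RᴴR - 1 = QᴴQ` by `Sᴴ` gives `R - Sᴴ = Sᴴ(QᴴQ)`, so `‖R - Sᴴ‖_F ≤ ‖Q‖_F ^ 2`. This controls
`R - 1` entrywise because `R` is upper and `Sᴴ` lower triangular: above the diagonal `R - Sᴴ` and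
`R - 1` agree, below it `R - 1` vanishes, and on it `|ρ - 1| ≤ |ρ - ρ⁻¹|` for `ρ > 0`. Finally
`S - 1 = S(1 - R)` has Frobenius norm at most `‖R - 1‖_F`.
-/

section

open WithLp SeminormedAddCommGroup
open scoped ComplexOrder Matrix.Norms.L2Operator

-- Only one matrix norm can be an instance: `‖·‖` is the spectral norm, `‖·‖_F` the Frobenius norm.
local notation "‖" A "‖_F" => @norm _ (@toNorm _ frobeniusSeminormedAddCommGroup) A

section Norms

variable {𝕜 l m n : Type*} [RCLike 𝕜] [Fintype l] [Fintype m] [Fintype n]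

lemma frobenius_norm_nonneg (A : Matrix m n 𝕜) : 0 ≤ ‖A‖_F :=
  @norm_nonneg _ frobeniusSeminormedAddCommGroup.toSeminormedAddGroup A

lemma frobenius_norm_sq (A : Matrix m n 𝕜) : ‖A‖_F ^ 2 = ∑ i, ∑ j, ‖A i j‖ ^ 2 := by
  rw [frobenius_norm_def, ← Real.sqrt_eq_rpow, Real.sq_sqrt (by positivity)]
  simp only [Real.rpow_two]

lemma frobenius_norm_sq_eq_sum_col (A : Matrix m n 𝕜) :
    ‖A‖_F ^ 2 = ∑ j, ‖toLp 2 (A.col j)‖ ^ 2 := by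
  rw [frobenius_norm_sq, Finset.sum_comm]
  simp only [EuclideanSpace.norm_sq_eq, col_apply]

lemma frobenius_norm_le_of_norm_apply_le {A B : Matrix m n 𝕜} (h : ∀ i j, ‖A i j‖ ≤ ‖B i j‖) :
    ‖A‖_F ≤ ‖B‖_F := by
  refine le_of_sq_le_sq ?_ (frobenius_norm_nonneg B)
  rw [frobenius_norm_sq, frobenius_norm_sq]
  gcongr with i _ j _
  exact h i j

lemma frobenius_norm_mul_le_l2_opNorm_mul [DecidableEq m] (A : Matrix l m 𝕜) (B : Matrix m n 𝕜) :
    ‖A * B‖_F ≤ ‖A‖ * ‖B‖_F := by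
  refine le_of_sq_le_sq ?_ (mul_nonneg (norm_nonneg A) (frobenius_norm_nonneg B))
  rw [mul_pow, frobenius_norm_sq_eq_sum_col, frobenius_norm_sq_eq_sum_col, Finset.mul_sum]
  gcongr with j _
  rw [← mul_pow]
  gcongr
  exact l2_opNorm_mulVec A (toLp 2 (B.col j))

lemma l2_opNorm_le_frobenius_norm [DecidableEq n] (A : Matrix m n 𝕜) : ‖A‖ ≤ ‖A‖_F := by
  refine ContinuousLinearMap.opNorm_le_bound _ (frobenius_norm_nonneg A) fun x => ?_
  have hmul := frobenius_norm_mul A (replicateCol Unit x.ofLp)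
  rwa [← replicateCol_mulVec, frobenius_norm_replicateCol, frobenius_norm_replicateCol] at hmul

lemma re_star_dotProduct_self (v : n → 𝕜) : RCLike.re (star v ⬝ᵥ v) = ‖toLp 2 v‖ ^ 2 := by
  rw [← inner_self_eq_norm_sq (𝕜 := 𝕜), EuclideanSpace.inner_toLp_toLp, dotProduct_comm]

lemma l2_opNorm_le_one_of_posSemidef [DecidableEq n] {A : Matrix m n 𝕜}
    (hA : (1 - Aᴴ * A).PosSemidef) : ‖A‖ ≤ 1 := by
  refine ContinuousLinearMap.opNorm_le_bound _ zero_le_one fun x => ?_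
  have hx := hA.re_dotProduct_nonneg x.ofLp
  rw [sub_mulVec, one_mulVec, ← mulVec_mulVec, dotProduct_sub, dotProduct_mulVec, ← star_mulVec,
    map_sub, sub_nonneg, re_star_dotProduct_self, re_star_dotProduct_self] at hx
  rw [one_mul]
  exact le_of_sq_le_sq hx (norm_nonneg x)

end Norms

section Gram

variable {𝕜 n : Type*} [RCLike 𝕜] [Fintype n] [DecidableEq n] {R : Matrix n n 𝕜}

lemma isUnit_det_of_posSemidef_gram_sub_one (hR : (Rᴴ * R - 1).PosSemidef) : IsUnit R.det := by
  have hgram : (Rᴴ * R).PosDef := by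
    simpa only [add_sub_cancel] using PosDef.one.add_posSemidef hR
  have hdet : IsUnit (Rᴴ * R).det := (isUnit_iff_isUnit_det _).mp hgram.isUnit
  exact isUnit_of_mul_isUnit_right (det_mul Rᴴ R ▸ hdet)

lemma l2_opNorm_inv_le_one_of_posSemidef_gram_sub_one (hR : (Rᴴ * R - 1).PosSemidef) :
    ‖R⁻¹‖ ≤ 1 := by
  have hmul : R * R⁻¹ = 1 := mul_nonsing_inv R (isUnit_det_of_posSemidef_gram_sub_one hR)
  have hcongr : R⁻¹ᴴ * (Rᴴ * R - 1) * R⁻¹ = 1 - R⁻¹ᴴ * R⁻¹ := by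
    calc R⁻¹ᴴ * (Rᴴ * R - 1) * R⁻¹ = (R * R⁻¹)ᴴ * (R * R⁻¹) - R⁻¹ᴴ * R⁻¹ := by
          rw [conjTranspose_mul]
          noncomm_ring
      _ = 1 - R⁻¹ᴴ * R⁻¹ := by rw [hmul, conjTranspose_one, one_mul]
  exact l2_opNorm_le_one_of_posSemidef (hcongr ▸ hR.conjTranspose_mul_mul_same R⁻¹)

end Gram

section UpperTriangular

variable {𝕜 n : Type*} [RCLike 𝕜] [Fintype n] [LinearOrder n] {R : Matrix n n 𝕜}

lemma mul_apply_self_of_isUpperTriangular {α : Type*} [NonUnitalNonAssocSemiring α]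
    {A B : Matrix n n α} (hA : A.IsUpperTriangular) (hB : B.IsUpperTriangular) (i : n) :
    (A * B) i i = A i i * B i i := by
  rw [mul_apply]
  refine Fintype.sum_eq_single i fun k hk => ?_
  rcases hk.lt_or_gt with hki | hik
  · rw [hA hki, zero_mul]
  · rw [hB hik, mul_zero]

lemma abs_sub_one_le_abs_sub_inv {x : ℝ} (hx : 0 < x) : |x - 1| ≤ |x - x⁻¹| := by
  have hfactor : x - x⁻¹ = (x - 1) * (1 + x⁻¹) := by
    field_simp
    ring
  have hone : 1 ≤ |1 + x⁻¹| :=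
    (le_add_of_nonneg_right (inv_nonneg.mpr hx.le)).trans (le_abs_self _)
  rw [hfactor, abs_mul]
  exact le_mul_of_one_le_right (abs_nonneg _) hone

lemma norm_sub_one_le_norm_sub_star_inv {x : 𝕜} (hx : 0 < x) : ‖x - 1‖ ≤ ‖x - star x⁻¹‖ := by
  obtain ⟨t, ht, rfl⟩ := RCLike.pos_iff_exists_ofReal.mp hx
  have habs := abs_sub_one_le_abs_sub_inv ht
  rw [RCLike.star_def, map_inv₀, RCLike.conj_ofReal]
  norm_cast

lemma frobenius_norm_one_sub_le_of_isUpperTriangular (hR : R.IsUpperTriangular)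
    (hdiag : ∀ i, 0 < R i i) : ‖1 - R‖_F ≤ ‖R - R⁻¹ᴴ‖_F := by
  have hdet : IsUnit R.det := by
    rw [det_of_isUpperTriangular hR]
    exact (Finset.prod_pos fun i _ => hdiag i).ne'.isUnit
  have hinv : R⁻¹.IsUpperTriangular := by
    have := invertibleOfIsUnitDet R hdet
    exact blockTriangular_inv_of_blockTriangular hR
  have hinvdiag (i : n) : R⁻¹ i i = (R i i)⁻¹ := by
    refine eq_inv_of_mul_eq_one_left ?_
    rw [← mul_apply_self_of_isUpperTriangular hinv hR, nonsing_inv_mul R hdet, one_apply_eq]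
  refine frobenius_norm_le_of_norm_apply_le fun i j => ?_
  rw [Matrix.sub_apply, Matrix.sub_apply, conjTranspose_apply, norm_sub_rev]
  rcases lt_trichotomy i j with hij | rfl | hji
  · rw [one_apply_ne hij.ne, hinv hij, star_zero]
  · rw [one_apply_eq, hinvdiag]
    exact norm_sub_one_le_norm_sub_star_inv (hdiag i)
  · rw [one_apply_ne hji.ne', hR hji, sub_zero, norm_zero]
    exact norm_nonneg _

lemma frobenius_norm_inv_sub_one_le_of_posSemidef_gram_sub_one (hR : R.IsUpperTriangular)
    (hdiag : ∀ i, 0 < R i i) (hgram : (Rᴴ * R - 1).PosSemidef) :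
    ‖R⁻¹ - 1‖_F ≤ ‖Rᴴ * R - 1‖_F := by
  have hdet : IsUnit R.det := isUnit_det_of_posSemidef_gram_sub_one hgram
  have hnorm : ‖R⁻¹‖ ≤ 1 := l2_opNorm_inv_le_one_of_posSemidef_gram_sub_one hgram
  have hnormStar : ‖R⁻¹ᴴ‖ ≤ 1 := by rwa [l2_opNorm_conjTranspose]
  have hinv : R⁻¹ - 1 = R⁻¹ * (1 - R) := by rw [mul_sub, nonsing_inv_mul R hdet, mul_one]
  have hresidual : R - R⁻¹ᴴ = R⁻¹ᴴ * (Rᴴ * R - 1) := by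
    rw [mul_sub, ← mul_assoc, ← conjTranspose_mul, mul_nonsing_inv R hdet, conjTranspose_one,
      one_mul, mul_one]
  calc ‖R⁻¹ - 1‖_F
    _ ≤ ‖R⁻¹‖ * ‖1 - R‖_F := hinv ▸ frobenius_norm_mul_le_l2_opNorm_mul _ _
    _ ≤ ‖1 - R‖_F := mul_le_of_le_one_left (frobenius_norm_nonneg _) hnorm
    _ ≤ ‖R - R⁻¹ᴴ‖_F := frobenius_norm_one_sub_le_of_isUpperTriangular hR hdiag
    _ ≤ ‖R⁻¹ᴴ‖ * ‖Rᴴ * R - 1‖_F := hresidual ▸ frobenius_norm_mul_le_l2_opNorm_mul _ _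
    _ ≤ ‖Rᴴ * R - 1‖_F := mul_le_of_le_one_left (frobenius_norm_nonneg _) hnormStar

theorem qr_perturbation_R_inv_general {m : Type*} [Fintype m] {Q : Matrix m n 𝕜}
    (hRtri : R.IsUpperTriangular) (hRdiag : ∀ i, 0 < R i i) (hR : Rᴴ * R = 1 + Qᴴ * Q) :
    IsUnit R.det ∧ ‖R⁻¹‖ ≤ 1 ∧ ‖R⁻¹ - 1‖_F ≤ ‖Q‖_F ^ 2 := by
  have hsub : Rᴴ * R - 1 = Qᴴ * Q := sub_eq_of_eq_add' hR
  have hgram : (Rᴴ * R - 1).PosSemidef := hsub ▸ posSemidef_conjTranspose_mul_self Q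
  refine ⟨isUnit_det_of_posSemidef_gram_sub_one hgram,
    l2_opNorm_inv_le_one_of_posSemidef_gram_sub_one hgram, ?_⟩
  calc ‖R⁻¹ - 1‖_F
    _ ≤ ‖Qᴴ * Q‖_F :=
      hsub ▸ frobenius_norm_inv_sub_one_le_of_posSemidef_gram_sub_one hRtri hRdiag hgram
    _ ≤ ‖Qᴴ‖_F * ‖Q‖_F := frobenius_norm_mul Qᴴ Q
    _ = ‖Q‖_F ^ 2 := by rw [frobenius_norm_conjTranspose, sq]

end UpperTriangular

lemma frobNorm_eq_frobenius_norm {m n : ℕ} (A : Matrix (Fin m) (Fin n) ℝ) :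
    frobNorm A = ‖A‖_F := by
  rw [← Real.sqrt_sq (frobenius_norm_nonneg A), frobenius_norm_sq]
  simp only [frobNorm, Real.norm_eq_abs, sq_abs]

lemma specNorm_le_frobNorm {m n : ℕ} (A : Matrix (Fin m) (Fin n) ℝ) : specNorm A ≤ frobNorm A :=
  frobNorm_eq_frobenius_norm A ▸ l2_opNorm_le_frobenius_norm A

end

/-- Perturbation of the QR decomposition, second and third conclusions:
R is invertible, ‖R⁻¹‖ ≤ 1/(1 − 2‖Q‖_F²), and ‖R⁻¹ − I‖ ≤ 4‖Q‖_F². -/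
theorem qr_perturbation_R_inv
    (d r : ℕ)
    (B Q : Matrix (Fin d) (Fin r) ℝ)
    (hB : Bᵀ * B = 1) (hBQ : Bᵀ * Q = 0)
    (hQ : frobNorm Q ^ 2 < 1 / 4)
    (R : Matrix (Fin r) (Fin r) ℝ)
    (hRtri : R.BlockTriangular id)
    (hRdiag : ∀ i, 0 < R i i)
    (hR : Rᵀ * R = 1 + Qᵀ * Q) :
    IsUnit R.det
      ∧ specNorm R⁻¹ ≤ 1 / (1 - 2 * frobNorm Q ^ 2)
      ∧ specNorm (R⁻¹ - 1) ≤ 4 * frobNorm Q ^ 2 := by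
  obtain ⟨hdet, hinv, hsub⟩ := qr_perturbation_R_inv_general hRtri hRdiag hR
  rw [← frobNorm_eq_frobenius_norm, ← frobNorm_eq_frobenius_norm] at hsub
  have hsq := sq_nonneg (frobNorm Q)
  exact ⟨hdet, hinv.trans (one_le_one_div (by linarith) (by linarith)),
    by linarith [specNorm_le_frobNorm (R⁻¹ - 1)]⟩
end

section
/- Let L ≥ 1 be an integer, β ≥ 0, U_ω ≥ 0, and let Π denote the Euclidean projection onto the closed ball of radius U_ω centered at the origin in ℝ^r. Let B ∈ ℝ^{d×r} satisfy BᵀB = I_r, let φ_0, …, φ_L ∈ ℝ^d with ‖φ_ℓ‖ ≤ 1 for all ℓ, let r_0, …, r_{L−1} ∈ ℝ, let η, J ∈ ℝ, let ω ∈ ℝ^r and z ∈ ℝ^d, and set w := B ω, x := w − z, δ := Σ_{ℓ=0}^{L−1}(r_ℓ − η) + (φ_L − φ_0)ᵀ w, and b := Σ_{ℓ=0}^{L−1}((r_ℓ − J) + (φ_{ℓ+1} − φ_ℓ)ᵀ z) φ_0. Then ‖Π(ω + (β/L) δ Bᵀ φ_0) − Π(ω)‖ ≤ (2β/L)‖x‖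 + (β/L)‖b‖ + β|η − J|. -/
/-!
The projection is nonexpansive and the adjoint of `B` is a contraction, so the increment is at most
`β / L` times the norm of `δ • φ 0`. Replacing `(η, w)` by `(J, z)` in the temporal-difference error
`δ` costs `⟪φ L - φ 0, w - z⟫`, where `‖φ L - φ 0‖ ≤ 2`, and `L * (J - η)`; what remains,
multiplied by `φ 0`, is `b` after telescoping.
-/

open Matrix BigOperators

/-- Euclidean norm of a vector. -/
noncomputable def euclNorm {n : ℕ} (v : Fin n → ℝ) : ℝ :=
  Real.sqrt (∑ i, (v i) ^ 2)

/-- `p` is a metric projection of `v` onto `K`. Stated as a relation, so that neither existence nor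
uniqueness of the projection has to be proved. -/
def IsNearestPoint {E : Type*} [SeminormedAddCommGroup E] (K : Set E) (v p : E) : Prop :=
  p ∈ K ∧ ∀ y ∈ K, ‖v - p‖ ≤ ‖v - y‖

section InnerProductSpace

open scoped RealInnerProductSpace InnerProduct

variable {E F : Type*} [NormedAddCommGroup E] [InnerProductSpace ℝ E]
  [NormedAddCommGroup F] [InnerProductSpace ℝ F]

namespace IsNearestPoint

variable {K : Set E} {u v p q : E}

theorem inner_sub_nonpos (hK : Convex ℝ K) (hp : IsNearestPoint K v p) (hq : q ∈ K) :
    ⟪v - p, q - p⟫ ≤ 0 :=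
  (norm_eq_iInf_iff_real_inner_le_zero hK hp.1).1
    (IsMinOn.iInf_eq (f := fun y ↦ ‖v - y‖) hp.1 (isMinOn_iff.2 hp.2)).symm q hq

theorem norm_sub_le_norm_sub (hK : Convex ℝ K) (hp : IsNearestPoint K u p)
    (hq : IsNearestPoint K v q) : ‖p - q‖ ≤ ‖u - v‖ := by
  have hpq : ⟪u - p, q - p⟫ ≤ 0 := hp.inner_sub_nonpos hK hq.1
  have hqp : ⟪v - q, p - q⟫ ≤ 0 := hq.inner_sub_nonpos hK hp.1
  have hsum : ‖p - q‖ ^ 2 = ⟪u - v, p - q⟫ + ⟪u - p, q - p⟫ + ⟪v - q, p - q⟫ := by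
    rw [← real_inner_self_eq_norm_sq, ← neg_sub p q, inner_neg_right, ← sub_eq_add_neg,
      ← inner_sub_left, ← inner_add_left]
    congr 1
    abel
  have hsq : ‖p - q‖ * ‖p - q‖ ≤ ‖u - v‖ * ‖p - q‖ := by
    linarith [real_inner_le_norm (u - v) (p - q), sq ‖p - q‖]
  obtain h | h := (norm_nonneg (p - q)).eq_or_lt
  · exact h ▸ norm_nonneg (u - v)
  · exact le_of_mul_le_mul_right hsq h

end IsNearestPoint

/-- The `L`-step average-reward temporal-difference error along the features `φ 0, …, φ L`, with
gain estimate `c` and linear value function `⟪·, w⟫`. The value terms are already telescoped, so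
only `φ 0` and `φ L` enter. -/
noncomputable def tdError (φ : ℕ → F) (rew : ℕ → ℝ) (L : ℕ) (c : ℝ) (w : F) : ℝ :=
  (∑ ℓ ∈ Finset.range L, (rew ℓ - c)) + ⟪φ L - φ 0, w⟫

variable (φ : ℕ → F) (rew : ℕ → ℝ) (L : ℕ)

theorem sum_one_step_tdError (c : ℝ) (w : F) :
    ∑ ℓ ∈ Finset.range L, ((rew ℓ - c) + ⟪φ (ℓ + 1) - φ ℓ, w⟫) = tdError φ rew L c w := by
  rw [tdError, Finset.sum_add_distrib, ← sum_inner, Finset.sum_range_sub]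

theorem tdError_eq_add_tdError (c c' : ℝ) (w z : F) :
    tdError φ rew L c w = ⟪φ L - φ 0, w - z⟫ + tdError φ rew L c' z + L * (c' - c) := by
  simp only [tdError, inner_sub_right, Finset.sum_sub_distrib, Finset.sum_const,
    Finset.card_range, nsmul_eq_mul]
  ring

variable {φ L}

theorem norm_tdError_smul_le (h₀ : ‖φ 0‖ ≤ 1) (hL : ‖φ L‖ ≤ 1) (c c' : ℝ) (w z : F) :
    ‖tdError φ rew L c w • φ 0‖
      ≤ 2 * ‖w - z‖ + ‖tdError φ rew L c' z • φ 0‖ + L * |c - c'| := by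
  have hfeature : ‖φ L - φ 0‖ ≤ 2 := by linarith [norm_sub_le (φ L) (φ 0)]
  have hvalue : ‖⟪φ L - φ 0, w - z⟫ • φ 0‖ ≤ 2 * ‖w - z‖ :=
    calc ‖⟪φ L - φ 0, w - z⟫ • φ 0‖ = ‖⟪φ L - φ 0, w - z⟫‖ * ‖φ 0‖ := norm_smul _ _
      _ ≤ ‖⟪φ L - φ 0, w - z⟫‖ := mul_le_of_le_one_right (norm_nonneg _) h₀
      _ ≤ ‖φ L - φ 0‖ * ‖w - z‖ := norm_inner_le_norm _ _
      _ ≤ 2 * ‖w - z‖ := by gcongr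
  have hgain : ‖((L : ℝ) * (c' - c)) • φ 0‖ ≤ L * |c - c'| := by
    rw [norm_smul, norm_mul, Real.norm_natCast, Real.norm_eq_abs, abs_sub_comm]
    exact mul_le_of_le_one_right (by positivity) h₀
  rw [tdError_eq_add_tdError φ rew L c c' w z, add_smul, add_smul]
  exact norm_add₃_le.trans (by gcongr)

theorem local_head_one_step_bound_general [CompleteSpace E] [CompleteSpace F]
    (hL : 1 ≤ L) {β : ℝ} (hβ : 0 ≤ β) {K : Set E} (hK : Convex ℝ K) {proj : E → E}
    (hproj : ∀ v, IsNearestPoint K v (proj v)) {B : E →L[ℝ] F} (hB : ‖B‖ ≤ 1)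
    (h₀ : ‖φ 0‖ ≤ 1) (hφL : ‖φ L‖ ≤ 1) (η J : ℝ) (ω : E) (z : F) :
    ‖proj (ω + (β / L * tdError φ rew L η (B ω)) • (B†) (φ 0)) - proj ω‖
      ≤ 2 * β / L * ‖B ω - z‖ + β / L * ‖tdError φ rew L J z • φ 0‖ + β * |η - J| := by
  have hL₀ : (L : ℝ) ≠ 0 := by positivity
  have hadj : ‖B†‖ ≤ 1 := (ContinuousLinearMap.adjoint.norm_map B).trans_le hB
  set δ := tdError φ rew L η (B ω)
  calc ‖proj (ω + (β / L * δ) • (B†) (φ 0)) - proj ω‖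
      ≤ ‖(ω + (β / L * δ) • (B†) (φ 0)) - ω‖ := (hproj _).norm_sub_le_norm_sub hK (hproj ω)
    _ = β / L * ‖(B†) (δ • φ 0)‖ := by
      rw [add_sub_cancel_left, mul_smul, ← map_smul, norm_smul_of_nonneg (by positivity)]
    _ ≤ β / L * ‖δ • φ 0‖ := by
      gcongr
      exact ((B†).le_of_opNorm_le hadj _).trans_eq (one_mul _)
    _ ≤ β / L * (2 * ‖B ω - z‖ + ‖tdError φ rew L J z • φ 0‖ + L * |η - J|) := by
      gcongr
      exact norm_tdError_smul_le rew h₀ hφL η J (B ω) z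
    _ = 2 * β / L * ‖B ω - z‖ + β / L * ‖tdError φ rew L J z • φ 0‖ + β * |η - J| := by
      field_simp

end InnerProductSpace

section Euclidean

open WithLp

theorem euclNorm_eq_norm_toLp {n : ℕ} (v : Fin n → ℝ) : euclNorm v = ‖toLp 2 v‖ := by
  simp only [euclNorm, EuclideanSpace.norm_eq, Real.norm_eq_abs, sq_abs]

theorem isNearestPoint_closedBall_toLp {n : ℕ} {R : ℝ} {v p : Fin n → ℝ} (hp : euclNorm p ≤ R)
    (hmin : ∀ y : Fin n → ℝ, euclNorm y ≤ R → euclNorm (v - p) ≤ euclNorm (v - y)) :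
    IsNearestPoint (Metric.closedBall 0 R) (toLp 2 v) (toLp 2 p) := by
  simp only [euclNorm_eq_norm_toLp, toLp_sub] at hp hmin
  exact ⟨mem_closedBall_zero_iff.2 hp, fun y hy ↦ hmin y.ofLp (mem_closedBall_zero_iff.1 hy)⟩

variable {m n : Type*} [Fintype m] [Fintype n] [DecidableEq n]

open scoped Matrix.Norms.L2Operator in
theorem norm_toEuclideanLin_le_one_of_transpose_mul_self {B : Matrix m n ℝ} (hB : Bᵀ * B = 1) :
    ‖(toEuclideanLin B).toContinuousLinearMap‖ ≤ 1 := by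
  have hsq : ‖B‖ * ‖B‖ = ‖(1 : Matrix n n ℝ)‖ := by
    rw [← l2_opNorm_conjTranspose_mul_self, conjTranspose_eq_transpose_of_trivial, hB]
  have hone : ‖(1 : Matrix n n ℝ)‖ ≤ 1 := by
    rw [← l2_opNorm_toEuclideanCLM, map_one]
    exact ContinuousLinearMap.norm_id_le
  exact (le_abs_self _).trans (abs_le_one_iff_mul_self_le_one.2 (hsq.trans_le hone))

theorem adjoint_toEuclideanLin_toLp (B : Matrix m n ℝ) (v : m → ℝ) :
    (toEuclideanLin B).toContinuousLinearMap.adjoint (toLp 2 v) = toLp 2 (Bᵀ *ᵥ v) := by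
  classical
  rw [← LinearMap.adjoint_toContinuousLinearMap, ← toEuclideanLin_conjTranspose_eq_adjoint,
    conjTranspose_eq_transpose_of_trivial, LinearMap.coe_toContinuousLinearMap', toLpLin_toLp,
    toLin'_apply]

theorem tdError_toLp (φ : ℕ → m → ℝ) (rew : ℕ → ℝ) (L : ℕ) (c : ℝ) (w : m → ℝ) :
    tdError (fun ℓ ↦ toLp 2 (φ ℓ)) rew L c (toLp 2 w)
      = (∑ ℓ ∈ Finset.range L, (rew ℓ - c)) + (φ L - φ 0) ⬝ᵥ w := by
  rw [tdError, ← toLp_sub, EuclideanSpace.inner_toLp_toLp, star_trivial, dotProduct_comm]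

theorem sum_one_step_tdError_toLp (φ : ℕ → m → ℝ) (rew : ℕ → ℝ) (L : ℕ) (c : ℝ) (w : m → ℝ) :
    ∑ ℓ ∈ Finset.range L, ((rew ℓ - c) + (φ (ℓ + 1) - φ ℓ) ⬝ᵥ w)
      = tdError (fun ℓ ↦ toLp 2 (φ ℓ)) rew L c (toLp 2 w) := by
  simp only [← sum_one_step_tdError, ← toLp_sub, EuclideanSpace.inner_toLp_toLp, star_trivial,
    dotProduct_comm w]

end Euclidean

/-- One-step bound on the projected local-head update increment:
‖Π(ω + (β/L)δ Bᵀφ₀) − Π(ω)‖ ≤ (2β/L)‖x‖ + (β/L)‖b‖ + β|η−J|. -/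
theorem local_head_one_step_bound
    (d r L : ℕ) (hL : 1 ≤ L)
    (β Uω : ℝ) (hβ : 0 ≤ β) (hUω : 0 ≤ Uω)
    (proj : (Fin r → ℝ) → (Fin r → ℝ))
    -- `proj` is the Euclidean projection onto the closed ball of radius U_ω:
    (hproj : ∀ v : Fin r → ℝ, euclNorm (proj v) ≤ Uω
      ∧ ∀ w' : Fin r → ℝ, euclNorm w' ≤ Uω → euclNorm (v - proj v) ≤ euclNorm (v - w'))
    (B : Matrix (Fin d) (Fin r) ℝ) (hB : Bᵀ * B = 1)
    (φ : ℕ → Fin d → ℝ) (hφ : ∀ ℓ, ℓ ≤ L → euclNorm (φ ℓ) ≤ 1)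
    (rew : ℕ → ℝ) (η J : ℝ) (ω : Fin r → ℝ) (z : Fin d → ℝ)
    (w : Fin d → ℝ) (hw : w = B.mulVec ω)
    (x : Fin d → ℝ) (hx : x = w - z)
    (δ : ℝ) (hδ : δ = (∑ ℓ ∈ Finset.range L, (rew ℓ - η)) + (φ L - φ 0) ⬝ᵥ w)
    (b : Fin d → ℝ)
    (hb : b = ∑ ℓ ∈ Finset.range L, ((rew ℓ - J) + (φ (ℓ + 1) - φ ℓ) ⬝ᵥ z) • φ 0) :
    euclNorm (proj (ω + ((β / (L : ℝ)) * δ) • (Bᵀ.mulVec (φ 0))) - proj ω)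
      ≤ (2 * β / (L : ℝ)) * euclNorm x + (β / (L : ℝ)) * euclNorm b + β * |η - J| := by
  subst hw hx hδ hb
  simp only [euclNorm_eq_norm_toLp] at hφ
  have hbound := local_head_one_step_bound_general (φ := fun ℓ ↦ WithLp.toLp 2 (φ ℓ)) rew hL hβ
    (convex_closedBall 0 Uω)
    (fun v ↦ isNearestPoint_closedBall_toLp (hproj v.ofLp).1 (hproj v.ofLp).2)
    (norm_toEuclideanLin_le_one_of_transpose_mul_self hB) (hφ 0 L.zero_le) (hφ L le_rfl) η J
    (WithLp.toLp 2 ω) (WithLp.toLp 2 z)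
  simpa only [← Finset.sum_smul, sum_one_step_tdError_toLp, ← tdError_toLp, euclNorm_eq_norm_toLp,
    adjoint_toEuclideanLin_toLp, LinearMap.coe_toContinuousLinearMap', toLpLin_toLp, toLin'_apply,
    WithLp.toLp_sub, WithLp.ofLp_add, WithLp.toLp_smul, WithLp.ofLp_smul] using hbound
end
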